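/- Let U ⊆ ℂ be an open set containing (α₀, 0), let z = x + iy : U → ℂ be holomorphic, ψ : U → ℝ smooth (C^∞), and G, B real constants with G ≠ 0. Assume: (a) ψ(α,0) = 0 for all α with (α,0) ∈ U; (b) ψ_β(α,0) = √(2(B − G·y(α,0))·(x_α(α,0)² + y_α(α,0)²)) for all α with (α,0) ∈ U; (c) x_α(α₀,0) = 0; (d) y_α(α₀,0) > 0; (e) B − G·y(α₀,0) > 0. Let k ≥ 2 be the least integer with ∂_α^k x(α₀,0) ≠ 0, and assume k is even (so α ↦ x(α,0) has a local extremum at α₀). Define F := ψ_α y_α + ψ_β x_α. Then there exist ε > 0 and a C¹ function h : (α₀ − ε, α₀ + ε) → ℝ with h(α₀) = 0 such that for (α,β) with |α − α₀| < ε, |β| < ε: F(α,β) = 0 if and only if β = h(α); and there is ε' ∈ (0, ε] such that h is nonzero on the punctured interval 0 < |α − α₀| < ε' and takes opposite (strict) signs on the two sides of α₀. In particular the critical layer touches the point (α₀,0) both from inside the fluid domain {β < 0} and from outside it. -/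

import Mathlib

/-- The numerator `ψ_α y_α + ψ_β x_α` of the horizontal fluid velocity, in conformal
coordinates, where `ℂ` is identified with `ℝ²` via `ζ = α + iβ`, `x = Re z`, `y = Im z`. -/
noncomputable def FnumC (z : ℂ → ℂ) (ψ : ℂ → ℝ) : ℂ → ℝ := fun ζ =>
  fderiv ℝ ψ ζ 1 * fderiv ℝ (fun w => (z w).im) ζ 1
    + fderiv ℝ ψ ζ Complex.I * fderiv ℝ (fun w => (z w).re) ζ 1

/-!
Differentiating the squared Bernoulli condition along the surface at the point `α₀`, where the
profile is vertical, gives `ψ_β F_β = -G y_α ^ 4 ≠ 0`. Hence the zero set of `F` is locally a graph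
`β = h(α)`, and `h ~ -F(·, 0) / F_β`. On the surface `F = ψ_β x_α`, so
`h ~ 2 (B - G y₀) / (G y_α ^ 2) * x_α`. As `x_α` vanishes at `α₀` to the exact order `k - 1`, which
is odd, it changes sign there, and so does `h`.
-/

open Filter Topology Asymptotics

section ImplicitFunction

lemma isEquivalent_of_apply_prodMk_eq {𝕜 E : Type*} [NontriviallyNormedField 𝕜]
    [NormedAddCommGroup E] [NormedSpace 𝕜 E] {f : E × 𝕜 → 𝕜} {f' : E × 𝕜 →L[𝕜] 𝕜} {a : E} {b y : 𝕜}
    (hf : HasStrictFDerivAt f f' (a, b)) (hf' : f' (0, 1) ≠ 0) {h : E → 𝕜}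
    (hh : Tendsto h (𝓝 a) (𝓝 b)) (hfh : ∀ᶠ x in 𝓝 a, f (x, h x) = y) :
    (fun x => h x - b) ~[𝓝 a] fun x => (y - f (x, b)) / f' (0, 1) := by
  have hlim : Tendsto (fun x => ((x, h x), (x, b))) (𝓝 a) (𝓝 ((a, b), (a, b))) :=
    (tendsto_id.prodMk_nhds hh).prodMk_nhds (tendsto_id.prodMk_nhds tendsto_const_nhds)
  have hlin (t : 𝕜) : f' (0, t) = t * f' (0, 1) := by
    rw [← smul_eq_mul, ← map_smul, Prod.smul_mk, smul_zero, smul_eq_mul, mul_one]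
  have hstrict : (fun x => y - f (x, b) - (h x - b) * f' (0, 1)) =o[𝓝 a] fun x => h x - b := by
    refine ((hf.isLittleO.comp_tendsto hlim).congr' ?_ .rfl).trans_isBigO
      (isBigO_of_le _ fun x => ?_)
    · filter_upwards [hfh] with x hx
      simp only [Function.comp_apply, hx, Prod.mk_sub_mk, sub_self, hlin (h x - b)]
    · simp [Prod.norm_def]
  refine IsEquivalent.symm ((hstrict.const_mul_left (f' (0, 1))⁻¹).congr_left fun x => ?_)
  simp only [Pi.sub_apply]
  field_simp

lemma exists_contDiffAt_implicitFunction_isEquivalent {𝕜 E : Type*} [RCLike 𝕜]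
    [NormedAddCommGroup E] [NormedSpace 𝕜 E] [CompleteSpace E] {f : E × 𝕜 → 𝕜} {a : E} {b : 𝕜}
    {n : WithTop ℕ∞} (hf : ContDiffAt 𝕜 n f (a, b)) (hn : n ≠ 0)
    (hf' : fderiv 𝕜 f (a, b) (0, 1) ≠ 0) :
    ∃ h : E → 𝕜, ContDiffAt 𝕜 n h a ∧ h a = b ∧
      (∀ᶠ v in 𝓝 (a, b), f v = f (a, b) ↔ v.2 = h v.1) ∧
      (fun x => h x - b) ~[𝓝 a] fun x => (f (a, b) - f (x, b)) / fderiv 𝕜 f (a, b) (0, 1) := by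
  have hinv : (fderiv 𝕜 f (a, b) ∘L .inr 𝕜 E 𝕜).IsInvertible :=
    ⟨ContinuousLinearEquiv.unitsEquivAut 𝕜 (Units.mk0 _ hf'), by ext; simp⟩
  have hh := hf.contDiffAt_implicitFunction hn hinv
  have hself := hf.implicitFunction_apply_self hn hinv
  refine ⟨hf.implicitFunction hn hinv, hh, hself, ?_, ?_⟩
  · simpa only [eq_comm] using hf.eventually_apply_eq_iff_implicitFunction hn hinv
  · exact isEquivalent_of_apply_prodMk_eq (hf.hasStrictFDerivAt hn) hf'
      (hh.continuousAt.tendsto.trans_eq (congrArg 𝓝 hself))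
      (hf.eventually_apply_implicitFunction hn hinv)

lemma exists_contDiffAt_graph_isEquivalent {f : ℂ → ℝ} {a : ℝ} {n : WithTop ℕ∞}
    (hf : ContDiffAt ℝ n f (a : ℂ)) (hn : n ≠ 0) (hfa : f a = 0)
    (hf' : fderiv ℝ f (a : ℂ) Complex.I ≠ 0) :
    ∃ h : ℝ → ℝ, ContDiffAt ℝ n h a ∧ h a = 0 ∧
      (∀ᶠ v : ℝ × ℝ in 𝓝 (a, 0), f (v.1 + v.2 * Complex.I) = 0 ↔ v.2 = h v.1) ∧
      h ~[𝓝 a] fun α => -f α / fderiv ℝ f (a : ℂ) Complex.I := by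
  let L : ℝ × ℝ →L[ℝ] ℂ := Complex.equivRealProdCLM.symm
  have hL (v : ℝ × ℝ) : L v = v.1 + v.2 * Complex.I := Complex.equivRealProd_symm_apply v
  have hL₀ (α : ℝ) : L (α, 0) = α := by simp [hL]
  rw [← hL₀] at hf hf'
  have hfd : fderiv ℝ (f ∘ L) (a, 0) (0, 1) = fderiv ℝ f (L (a, 0)) Complex.I := by
    rw [((hf.differentiableAt hn).hasFDerivAt.comp _ L.hasFDerivAt).fderiv]
    simp [hL]
  obtain ⟨h, hh, hha, hiff, hasymp⟩ := exists_contDiffAt_implicitFunction_isEquivalent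
    (hf.comp _ L.contDiff.contDiffAt) hn (hfd ▸ hf')
  simp only [hfd, Function.comp_apply, hL₀, hL, hfa, sub_zero, zero_sub] at hiff hasymp
  exact ⟨h, hh, hha, hiff, hasymp⟩

end ImplicitFunction

section SignChange

lemma exists_isEquivalent_pow_of_analyticOrderAt_eq {𝕜 : Type*} [NontriviallyNormedField 𝕜]
    {f : 𝕜 → 𝕜} {a : 𝕜} {n : ℕ} (hf : AnalyticAt 𝕜 f a) (hn : analyticOrderAt f a = n) :
    ∃ c ≠ 0, f ~[𝓝 a] fun x => c * (x - a) ^ n := by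
  obtain ⟨p, hp, hpa, hfp⟩ := hf.analyticOrderAt_eq_natCast.1 hn
  refine ⟨p a, hpa, IsEquivalent.congr_left ?_ (EventuallyEq.symm hfp)⟩
  have hpc : p ~[𝓝 a] fun _ => p a := (isEquivalent_const_iff_tendsto hpa).2 hp.continuousAt
  simpa only [smul_eq_mul, mul_comm] using! hpc.mul (IsEquivalent.refl (u := fun x => (x - a) ^ n))

lemma analyticOrderAt_deriv_eq_of_iteratedDeriv {𝕜 : Type*} [NontriviallyNormedField 𝕜]
    [CharZero 𝕜] [CompleteSpace 𝕜] {f : 𝕜 → 𝕜} {a : 𝕜} {k : ℕ} (hf : AnalyticAt 𝕜 f a)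
    (hk : 1 ≤ k) (hmin : ∀ j, 1 ≤ j → j < k → iteratedDeriv j f a = 0)
    (hne : iteratedDeriv k f a ≠ 0) : analyticOrderAt (deriv f) a = (k - 1 : ℕ) := by
  rw [analyticOrderAt_eq_nat_iff_iteratedDeriv_eq_zero hf.deriv]
  simp only [← iteratedDeriv_succ', Nat.sub_add_cancel hk]
  exact ⟨fun j hj => hmin _ (by omega) (by omega), hne⟩

lemma eventually_pos_of_isEquivalent_odd_pow {u : ℝ → ℝ} {a c : ℝ} {n : ℕ} (hn : Odd n)
    (hc : c ≠ 0) (hu : u ~[𝓝 a] fun x => c * (x - a) ^ n) :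
    ∀ᶠ x in 𝓝[≠] a, 0 < c * (x - a) * u x := by
  have hmul : (fun x => c * (x - a) * u x) ~[𝓝[≠] a] fun x => c ^ 2 * (x - a) ^ (n + 1) := by
    refine ((IsEquivalent.refl (u := fun x => c * (x - a))).mul
      (hu.mono nhdsWithin_le_nhds)).congr_right (.of_eq ?_)
    ext x
    simp only [Pi.mul_apply]
    ring
  refine hmul.eventually_pos ?_
  filter_upwards [self_mem_nhdsWithin] with x hx
  have : 0 < (x - a) ^ (n + 1) := hn.add_one.pow_pos (sub_ne_zero.2 hx)
  positivity

lemma exists_forall_mul_neg_of_isEquivalent_odd_pow {u : ℝ → ℝ} {a c : ℝ} {n : ℕ} (hn : Odd n)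
    (hc : c ≠ 0) (hu : u ~[𝓝 a] fun x => c * (x - a) ^ n) :
    ∃ δ > 0, (∀ x, x ≠ a → |x - a| < δ → u x ≠ 0) ∧
      ∀ x x', a < x → x < a + δ → a - δ < x' → x' < a → u x * u x' < 0 := by
  obtain ⟨δ, hδ, hpos⟩ := Metric.eventually_nhds_iff.1
    (eventually_nhdsWithin_iff.1 (eventually_pos_of_isEquivalent_odd_pow hn hc hu))
  simp only [Real.dist_eq, Set.mem_compl_singleton_iff] at hpos
  refine ⟨δ, hδ, fun x hxa hx hux => ?_, fun x x' hx hxδ hxδ' hx' => ?_⟩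
  · simpa [hux] using hpos hx hxa
  · have hprod := mul_pos (hpos (y := x) (abs_lt.2 ⟨by linarith, by linarith⟩) hx.ne')
      (hpos (y := x') (abs_lt.2 ⟨by linarith, by linarith⟩) hx'.ne)
    have hneg : c ^ 2 * ((x - a) * (x' - a)) ≤ 0 :=
      mul_nonpos_of_nonneg_of_nonpos (sq_nonneg c)
        (mul_nonpos_of_nonneg_of_nonpos (by linarith) (by linarith))
    refine neg_of_mul_pos_right (a := c ^ 2 * ((x - a) * (x' - a))) ?_ hneg
    linear_combination hprod

end SignChange

section RealAxis

lemma hasDerivAt_comp_ofReal {E : Type*} [NormedAddCommGroup E] [NormedSpace ℝ E] {f : ℂ → E}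
    {f' : ℂ →L[ℝ] E} {a : ℝ} (hf : HasFDerivAt f f' (a : ℂ)) :
    HasDerivAt (fun t : ℝ => f t) (f' 1) a :=
  hf.comp_hasDerivAt a Complex.ofRealCLM.hasDerivAt

lemma fderiv_one_eq_zero_of_eventually_ofReal {E : Type*} [NormedAddCommGroup E] [NormedSpace ℝ E]
    {f : ℂ → E} {a : ℝ} (hf : DifferentiableAt ℝ f (a : ℂ)) (h0 : ∀ᶠ t : ℝ in 𝓝 a, f t = 0) :
    fderiv ℝ f (a : ℂ) 1 = 0 :=
  (hasDerivAt_comp_ofReal hf.hasFDerivAt).unique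
    ((hasDerivAt_const a (0 : E)).congr_of_eventuallyEq h0)

variable {z : ℂ → ℂ} {z' ζ : ℂ}

lemma hasFDerivAt_re (hz : HasDerivAt z z' ζ) :
    HasFDerivAt (fun w => (z w).re) (Complex.reCLM ∘L (z' • (1 : ℂ →L[ℝ] ℂ))) ζ :=
  Complex.reCLM.hasFDerivAt.comp ζ hz.complexToReal_fderiv

lemma hasFDerivAt_im (hz : HasDerivAt z z' ζ) :
    HasFDerivAt (fun w => (z w).im) (Complex.imCLM ∘L (z' • (1 : ℂ →L[ℝ] ℂ))) ζ :=
  Complex.imCLM.hasFDerivAt.comp ζ hz.complexToReal_fderiv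

lemma hasDerivAt_im_comp_ofReal {a : ℝ} (hz : HasDerivAt z z' (a : ℂ)) :
    HasDerivAt (fun t : ℝ => (z t).im) z'.im a := by
  simpa using hasDerivAt_comp_ofReal (hasFDerivAt_im hz)

lemma fderiv_re_one (hz : DifferentiableAt ℂ z ζ) :
    fderiv ℝ (fun w => (z w).re) ζ 1 = (deriv z ζ).re := by
  simp [(hasFDerivAt_re hz.hasDerivAt).fderiv]

lemma fderiv_im_one (hz : DifferentiableAt ℂ z ζ) :
    fderiv ℝ (fun w => (z w).im) ζ 1 = (deriv z ζ).im := by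
  simp [(hasFDerivAt_im hz.hasDerivAt).fderiv]

lemma analyticAt_re_comp_ofReal {a : ℝ} (hz : AnalyticAt ℂ z (a : ℂ)) :
    AnalyticAt ℝ (fun t : ℝ => (z t).re) a :=
  (Complex.reCLM.analyticAt _).comp (hz.restrictScalars.comp (Complex.ofRealCLM.analyticAt a))

lemma exists_deriv_re_isEquivalent_pow {a : ℝ} {k : ℕ} (hz : AnalyticAt ℂ z (a : ℂ)) (hk : 1 ≤ k)
    (hmin : ∀ j, 1 ≤ j → j < k → iteratedDeriv j (fun t : ℝ => (z t).re) a = 0)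
    (hne : iteratedDeriv k (fun t : ℝ => (z t).re) a ≠ 0) :
    ∃ c ≠ 0, (fun t : ℝ => (deriv z t).re) ~[𝓝 a] fun t => c * (t - a) ^ (k - 1) := by
  have hx := analyticAt_re_comp_ofReal hz
  obtain ⟨c, hc, hequiv⟩ := exists_isEquivalent_pow_of_analyticOrderAt_eq hx.deriv
    (analyticOrderAt_deriv_eq_of_iteratedDeriv hx hk hmin hne)
  refine ⟨c, hc, hequiv.congr_left ?_⟩
  filter_upwards [Complex.continuous_ofReal.continuousAt.eventually hz.eventually_analyticAt]
    with t ht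
  exact ht.differentiableAt.hasDerivAt.real_of_complex.deriv

end RealAxis

section HorizontalVelocity

lemma hasFDerivAt_fderiv_apply {𝕜 E F : Type*} [NontriviallyNormedField 𝕜]
    [NormedAddCommGroup E] [NormedSpace 𝕜 E] [NormedAddCommGroup F] [NormedSpace 𝕜 F]
    {f : E → F} {x : E} (hf : ContDiffAt 𝕜 2 f x) (v : E) :
    HasFDerivAt (fun w => fderiv 𝕜 f w v) ((fderiv 𝕜 (fderiv 𝕜 f) x).flip v) x := by
  have hf' : HasFDerivAt (fderiv 𝕜 f) (fderiv 𝕜 (fderiv 𝕜 f) x) x :=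
    ((hf.fderiv_right (m := 1) (by norm_num)).differentiableAt one_ne_zero).hasFDerivAt
  simpa using hf'.clm_apply (hasFDerivAt_const v x)

variable {z : ℂ → ℂ} {ψ : ℂ → ℝ} {ζ : ℂ}

lemma FnumC_eventuallyEq (hz : AnalyticAt ℂ z ζ) (ψ : ℂ → ℝ) :
    FnumC z ψ =ᶠ[𝓝 ζ] fun w =>
      fderiv ℝ ψ w 1 * (deriv z w).im + fderiv ℝ ψ w Complex.I * (deriv z w).re := by
  filter_upwards [hz.eventually_analyticAt] with w hw
  rw [FnumC, fderiv_re_one hw.differentiableAt, fderiv_im_one hw.differentiableAt]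

lemma contDiffAt_FnumC (hz : AnalyticAt ℂ z ζ) (hψ : ContDiffAt ℝ 2 ψ ζ) :
    ContDiffAt ℝ 1 (FnumC z ψ) ζ := by
  have hz' : ContDiffAt ℝ 1 (deriv z) ζ := hz.deriv.restrictScalars.contDiffAt
  have hre : ContDiffAt ℝ 1 (fun w => (deriv z w).re) ζ :=
    Complex.reCLM.contDiff.contDiffAt.comp ζ hz'
  have him : ContDiffAt ℝ 1 (fun w => (deriv z w).im) ζ :=
    Complex.imCLM.contDiff.contDiffAt.comp ζ hz'
  have hψ' : ContDiffAt ℝ 1 (fderiv ℝ ψ) ζ := hψ.fderiv_right (by norm_num)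
  exact (((hψ'.clm_apply contDiffAt_const).mul him).add
    ((hψ'.clm_apply contDiffAt_const).mul hre)).congr_of_eventuallyEq (FnumC_eventuallyEq hz ψ)

lemma fderiv_FnumC_I (hz : AnalyticAt ℂ z ζ) (hψ : ContDiffAt ℝ 2 ψ ζ)
    (hψ1 : fderiv ℝ ψ ζ 1 = 0) (hx : (deriv z ζ).re = 0) :
    fderiv ℝ (FnumC z ψ) ζ Complex.I =
      fderiv ℝ (fderiv ℝ ψ) ζ 1 Complex.I * (deriv z ζ).im
        - fderiv ℝ ψ ζ Complex.I * (deriv (deriv z) ζ).im := by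
  have hz' := hz.deriv.differentiableAt.hasDerivAt
  have hF := ((hasFDerivAt_fderiv_apply hψ 1).fun_mul (hasFDerivAt_im hz')).fun_add
    ((hasFDerivAt_fderiv_apply hψ Complex.I).fun_mul (hasFDerivAt_re hz'))
  have hsymm : IsSymmSndFDerivAt ℝ ψ ζ := hψ.isSymmSndFDerivAt (by simp)
  rw [(FnumC_eventuallyEq hz ψ).fderiv_eq, hF.fderiv]
  simp only [add_apply, smul_apply, ContinuousLinearMap.flip_apply, ContinuousLinearMap.comp_apply,
    one_apply_eq_self, smul_eq_mul, Complex.reCLM_apply, Complex.imCLM_apply, Complex.mul_re,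
    Complex.mul_im, Complex.I_re, Complex.I_im, hψ1, hx, hsymm.eq Complex.I 1]
  ring

end HorizontalVelocity

section CriticalLayer

/-- The dynamic boundary condition `|∇ψ|² + 2 G y = 2 B` on the surface `β = 0` near the point `a`,
for a stream function that is constant on the surface, so that `|∇ψ|² = ψ_β² / |z'|²` there. The
squared form leaves the direction of the flow open. -/
def BernoulliAt (z : ℂ → ℂ) (ψ : ℂ → ℝ) (G B a : ℝ) : Prop :=
  ∀ᶠ α : ℝ in 𝓝 a, fderiv ℝ ψ (α : ℂ) Complex.I ^ 2 =
    2 * (B - G * (z (α : ℂ)).im) * ((deriv z (α : ℂ)).re ^ 2 + (deriv z (α : ℂ)).im ^ 2)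

variable {z : ℂ → ℂ} {ψ : ℂ → ℝ} {a G B : ℝ}

lemma BernoulliAt.of_eq_sqrt (hz : AnalyticAt ℂ z (a : ℂ)) (hB : 0 < B - G * (z (a : ℂ)).im)
    (h : ∀ᶠ α : ℝ in 𝓝 a, fderiv ℝ ψ (α : ℂ) Complex.I =
      √(2 * (B - G * (z (α : ℂ)).im) * ((fderiv ℝ (fun w => (z w).re) (α : ℂ) 1) ^ 2
        + (fderiv ℝ (fun w => (z w).im) (α : ℂ) 1) ^ 2))) :
    BernoulliAt z ψ G B a := by
  have hreal : ContinuousAt ((↑) : ℝ → ℂ) a := Complex.continuous_ofReal.continuousAt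
  have hcont : ContinuousAt (fun α : ℝ => B - G * (z (α : ℂ)).im) a :=
    continuousAt_const.sub (continuousAt_const.mul
      (Complex.continuous_im.continuousAt.comp (hz.continuousAt.comp hreal)))
  filter_upwards [h, hcont.eventually_const_lt hB, hreal.eventually hz.eventually_analyticAt]
    with α hα hpos hzα
  rw [hα, fderiv_re_one hzα.differentiableAt, fderiv_im_one hzα.differentiableAt]
  exact Real.sq_sqrt (by positivity)

lemma BernoulliAt.fderiv_I_mul_fderiv_fderiv (hb : BernoulliAt z ψ G B a)
    (hz : AnalyticAt ℂ z (a : ℂ)) (hψ : ContDiffAt ℝ 2 ψ (a : ℂ))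
    (hx : (deriv z (a : ℂ)).re = 0) :
    fderiv ℝ ψ (a : ℂ) Complex.I * fderiv ℝ (fderiv ℝ ψ) (a : ℂ) 1 Complex.I =
      2 * (B - G * (z (a : ℂ)).im) * ((deriv z (a : ℂ)).im * (deriv (deriv z) (a : ℂ)).im)
        - G * (deriv z (a : ℂ)).im ^ 3 := by
  have hz' := hz.deriv.differentiableAt.hasDerivAt
  have hψI : HasDerivAt (fun α : ℝ => fderiv ℝ ψ (α : ℂ) Complex.I)
      (fderiv ℝ (fderiv ℝ ψ) (a : ℂ) 1 Complex.I) a :=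
    hasDerivAt_comp_ofReal (hasFDerivAt_fderiv_apply hψ Complex.I)
  have hy := hasDerivAt_im_comp_ofReal hz.differentiableAt.hasDerivAt
  have hrhs := (((hy.const_mul G).const_sub B).const_mul 2).fun_mul
    ((hz'.real_of_complex.fun_pow 2).fun_add ((hasDerivAt_im_comp_ofReal hz').fun_pow 2))
  have heq := (hψI.fun_pow 2).unique (hrhs.congr_of_eventuallyEq hb)
  simp only [Nat.cast_ofNat, Nat.add_one_sub_one, pow_one, hx] at heq
  linear_combination heq / 2

lemma BernoulliAt.fderiv_I_mul_fderiv_FnumC_I (hb : BernoulliAt z ψ G B a)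
    (hz : AnalyticAt ℂ z (a : ℂ)) (hψ : ContDiffAt ℝ 2 ψ (a : ℂ))
    (ha : ∀ᶠ α : ℝ in 𝓝 a, ψ (α : ℂ) = 0) (hx : (deriv z (a : ℂ)).re = 0) :
    fderiv ℝ ψ (a : ℂ) Complex.I * fderiv ℝ (FnumC z ψ) (a : ℂ) Complex.I =
      -(G * (deriv z (a : ℂ)).im ^ 4) := by
  have hψ1 := fderiv_one_eq_zero_of_eventually_ofReal (hψ.differentiableAt two_ne_zero) ha
  have hb₀ := hb.self_of_nhds
  rw [hx] at hb₀
  rw [fderiv_FnumC_I hz hψ hψ1 hx]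
  linear_combination (deriv z (a : ℂ)).im * hb.fderiv_I_mul_fderiv_fderiv hz hψ hx
    - (deriv (deriv z) (a : ℂ)).im * hb₀

lemma BernoulliAt.sub_ne_zero (hb : BernoulliAt z ψ G B a) (hG : G ≠ 0)
    (hz : AnalyticAt ℂ z (a : ℂ)) (hψ : ContDiffAt ℝ 2 ψ (a : ℂ))
    (ha : ∀ᶠ α : ℝ in 𝓝 a, ψ (α : ℂ) = 0) (hx : (deriv z (a : ℂ)).re = 0)
    (hy : (deriv z (a : ℂ)).im ≠ 0) : B - G * (z (a : ℂ)).im ≠ 0 := by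
  intro hB
  have hψI := hb.self_of_nhds
  rw [hB, mul_zero, zero_mul, sq_eq_zero_iff] at hψI
  have hprod := hb.fderiv_I_mul_fderiv_FnumC_I hz hψ ha hx
  rw [hψI, zero_mul, zero_eq_neg] at hprod
  exact mul_ne_zero hG (pow_ne_zero 4 hy) hprod

lemma FnumC_ofReal_eventuallyEq (hz : AnalyticAt ℂ z (a : ℂ)) (hψ : ContDiffAt ℝ 1 ψ (a : ℂ))
    (ha : ∀ᶠ α : ℝ in 𝓝 a, ψ (α : ℂ) = 0) :
    (fun α : ℝ => FnumC z ψ α) =ᶠ[𝓝 a]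
      fun α => fderiv ℝ ψ (α : ℂ) Complex.I * (deriv z (α : ℂ)).re := by
  have hreal : ContinuousAt ((↑) : ℝ → ℂ) a := Complex.continuous_ofReal.continuousAt
  filter_upwards [hreal.eventually (FnumC_eventuallyEq hz ψ),
    hreal.eventually (hψ.eventually (by simp)), ha.eventually_nhds] with α hF hψα hα
  rw [hF, fderiv_one_eq_zero_of_eventually_ofReal (hψα.differentiableAt one_ne_zero) hα,
    zero_mul, zero_add]

lemma FnumC_ofReal_isEquivalent (hz : AnalyticAt ℂ z (a : ℂ)) (hψ : ContDiffAt ℝ 1 ψ (a : ℂ))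
    (ha : ∀ᶠ α : ℝ in 𝓝 a, ψ (α : ℂ) = 0) (hψI : fderiv ℝ ψ (a : ℂ) Complex.I ≠ 0) :
    (fun α : ℝ => FnumC z ψ α) ~[𝓝 a]
      fun α => fderiv ℝ ψ (a : ℂ) Complex.I * (deriv z (α : ℂ)).re := by
  have hlim : ContinuousAt (fun α : ℝ => fderiv ℝ ψ (α : ℂ) Complex.I) a :=
    ((hψ.continuousAt_fderiv one_ne_zero).clm_apply continuousAt_const).comp
      Complex.continuous_ofReal.continuousAt
  exact (FnumC_ofReal_eventuallyEq hz hψ ha).trans_isEquivalent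
    (((isEquivalent_const_iff_tendsto hψI).2 hlim).mul .refl)

theorem BernoulliAt.exists_criticalLayer_graph_isEquivalent (hb : BernoulliAt z ψ G B a)
    (hG : G ≠ 0) (hz : AnalyticAt ℂ z (a : ℂ)) (hψ : ContDiffAt ℝ 2 ψ (a : ℂ))
    (ha : ∀ᶠ α : ℝ in 𝓝 a, ψ (α : ℂ) = 0)
    (hx : (deriv z (a : ℂ)).re = 0) (hy : (deriv z (a : ℂ)).im ≠ 0) :
    ∃ h : ℝ → ℝ, ContDiffAt ℝ 1 h a ∧ h a = 0 ∧
      (∀ᶠ v : ℝ × ℝ in 𝓝 (a, 0), FnumC z ψ (v.1 + v.2 * Complex.I) = 0 ↔ v.2 = h v.1) ∧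
      h ~[𝓝 a] fun α =>
        2 * (B - G * (z (a : ℂ)).im) / (G * (deriv z (a : ℂ)).im ^ 2) * (deriv z (α : ℂ)).re := by
  have hprod := hb.fderiv_I_mul_fderiv_FnumC_I hz hψ ha hx
  obtain ⟨hψI, hFI⟩ : fderiv ℝ ψ (a : ℂ) Complex.I ≠ 0 ∧
      fderiv ℝ (FnumC z ψ) (a : ℂ) Complex.I ≠ 0 := by
    rw [← mul_ne_zero_iff, hprod]
    exact neg_ne_zero.2 (mul_ne_zero hG (pow_ne_zero 4 hy))
  have hFa : FnumC z ψ (a : ℂ) = 0 := by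
    simpa only [hx, mul_zero] using
      (FnumC_ofReal_eventuallyEq hz (hψ.of_le one_le_two) ha).self_of_nhds
  have hslope : 2 * (B - G * (z (a : ℂ)).im) / (G * (deriv z (a : ℂ)).im ^ 2) =
      -fderiv ℝ ψ (a : ℂ) Complex.I / fderiv ℝ (FnumC z ψ) (a : ℂ) Complex.I := by
    have hb₀ := hb.self_of_nhds
    rw [hx] at hb₀
    rw [div_eq_div_iff (mul_ne_zero hG (pow_ne_zero 2 hy)) hFI]
    refine mul_left_cancel₀ (mul_ne_zero hψI (pow_ne_zero 2 hy)) ?_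
    linear_combination 2 * (B - G * (z (a : ℂ)).im) * (deriv z (a : ℂ)).im ^ 2 * hprod
      + G * (deriv z (a : ℂ)).im ^ 4 * hb₀
  obtain ⟨h, hh, hha, hiff, hasymp⟩ :=
    exists_contDiffAt_graph_isEquivalent (contDiffAt_FnumC hz hψ) one_ne_zero hFa hFI
  refine ⟨h, hh, hha, hiff, hasymp.trans ?_⟩
  simpa only [hslope, neg_mul, neg_div, div_mul_eq_mul_div] using!
    ((FnumC_ofReal_isEquivalent hz (hψ.of_le one_le_two) ha hψI).div .refl).neg

end CriticalLayer

lemma exists_pos_forall_abs_sub_lt {p : ℝ × ℝ → Prop} {q : ℝ → Prop} {a b : ℝ}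
    (hp : ∀ᶠ v in 𝓝 (a, b), p v) (hq : ∀ᶠ x in 𝓝 a, q x) :
    ∃ ε > 0, (∀ x y, |x - a| < ε → |y - b| < ε → p (x, y)) ∧ ∀ x, |x - a| < ε → q x := by
  obtain ⟨ε, hε, hpq⟩ := Metric.eventually_nhds_iff.1
    (hp.and (continuous_fst.continuousAt.eventually hq))
  simp only [Prod.forall, Prod.dist_eq, max_lt_iff, Real.dist_eq, and_imp] at hpq
  exact ⟨ε, hε, fun x y hx hy => (hpq x y hx hy).1, fun x hx => (hpq x b hx (by simpa)).2⟩

theorem stmt_13_general {U : Set ℂ} {z : ℂ → ℂ} {ψ : ℂ → ℝ} {α₀ G B : ℝ}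
    (hU : U ∈ 𝓝 (α₀ : ℂ)) (hz : AnalyticAt ℂ z (α₀ : ℂ)) (hψ : ContDiffAt ℝ 2 ψ (α₀ : ℂ))
    (hG : G ≠ 0) (ha : ∀ᶠ α : ℝ in 𝓝 α₀, ψ (α : ℂ) = 0) (hb : BernoulliAt z ψ G B α₀)
    (hc : (deriv z (α₀ : ℂ)).re = 0) (hd : (deriv z (α₀ : ℂ)).im ≠ 0) {k : ℕ} (hk : 1 ≤ k)
    (hkmin : ∀ j : ℕ, 1 ≤ j → j < k → iteratedDeriv j (fun α : ℝ => (z (α : ℂ)).re) α₀ = 0)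
    (hkne : iteratedDeriv k (fun α : ℝ => (z (α : ℂ)).re) α₀ ≠ 0) (hkeven : Even k) :
    ∃ ε > (0 : ℝ), ∃ h : ℝ → ℝ,
      ContDiffOn ℝ 1 h (Set.Ioo (α₀ - ε) (α₀ + ε)) ∧
      h α₀ = 0 ∧
      (∀ α β : ℝ, |α - α₀| < ε → |β| < ε →
        ((α : ℂ) + (β : ℂ) * Complex.I ∈ U ∧
          (FnumC z ψ ((α : ℂ) + (β : ℂ) * Complex.I) = 0 ↔ β = h α))) ∧
      ∃ ε' : ℝ, 0 < ε' ∧ ε' ≤ ε ∧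
        (∀ α : ℝ, α ≠ α₀ → |α - α₀| < ε' → h α ≠ 0) ∧
        (∀ α α' : ℝ, α₀ < α → α < α₀ + ε' → α₀ - ε' < α' → α' < α₀ → h α * h α' < 0) := by
  obtain ⟨h, hh, hh₀, hiff, hasymp⟩ :=
    hb.exists_criticalLayer_graph_isEquivalent hG hz hψ ha hc hd
  have hslope : 2 * (B - G * (z (α₀ : ℂ)).im) / (G * (deriv z (α₀ : ℂ)).im ^ 2) ≠ 0 :=
    div_ne_zero (mul_ne_zero two_ne_zero (hb.sub_ne_zero hG hz hψ ha hc hd))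
      (mul_ne_zero hG (pow_ne_zero 2 hd))
  obtain ⟨c, hc, hx⟩ := exists_deriv_re_isEquivalent_pow hz hk hkmin hkne
  have hpow := hasymp.trans (IsEquivalent.refl.mul hx)
  simp only [Pi.mul_def, ← mul_assoc] at hpow
  have hodd : Odd (k - 1) := Nat.Even.sub_odd hk hkeven odd_one
  obtain ⟨δ, hδ, hne, hneg⟩ :=
    exists_forall_mul_neg_of_isEquivalent_odd_pow hodd (mul_ne_zero hslope hc) hpow
  have hmem : ∀ᶠ v : ℝ × ℝ in 𝓝 (α₀, 0), (v.1 + v.2 * Complex.I : ℂ) ∈ U :=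
    ContinuousAt.eventually_mem (by fun_prop) (by simpa)
  obtain ⟨ε, hε, hbox, hdiff⟩ :=
    exists_pos_forall_abs_sub_lt (hmem.and hiff) (hh.eventually (by simp))
  refine ⟨ε, hε, h, fun α hα => (hdiff α ?_).contDiffWithinAt, hh₀,
    fun α β hα hβ => hbox α β hα (by simpa), min ε δ, lt_min hε hδ, min_le_left _ _,
    fun α hα₀ hα => hne α hα₀ (hα.trans_le (min_le_right _ _)), fun α α' hα hαδ hδα' hα' => ?_⟩
  · exact abs_sub_lt_iff.2 ⟨by linarith [hα.2], by linarith [hα.1]⟩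
  · have := min_le_right ε δ
    exact hneg α α' hα (by linarith) (by linarith) hα'

theorem stmt_13 (U : Set ℂ) (hU : IsOpen U) (α₀ : ℝ) (hα₀ : (α₀ : ℂ) ∈ U)
    (z : ℂ → ℂ) (hz : DifferentiableOn ℂ z U)
    (ψ : ℂ → ℝ) (hψ : ContDiffOn ℝ (⊤ : ℕ∞) ψ U) (G B : ℝ) (hG : G ≠ 0)
    (ha : ∀ α : ℝ, (α : ℂ) ∈ U → ψ (α : ℂ) = 0)
    (hb : ∀ α : ℝ, (α : ℂ) ∈ U →
      fderiv ℝ ψ (α : ℂ) Complex.I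
        = Real.sqrt (2 * (B - G * (z (α : ℂ)).im) *
            ((fderiv ℝ (fun w => (z w).re) (α : ℂ) 1) ^ 2
              + (fderiv ℝ (fun w => (z w).im) (α : ℂ) 1) ^ 2)))
    (hc : fderiv ℝ (fun w => (z w).re) (α₀ : ℂ) 1 = 0)
    (hd : 0 < fderiv ℝ (fun w => (z w).im) (α₀ : ℂ) 1)
    (he : 0 < B - G * (z (α₀ : ℂ)).im)
    (k : ℕ) (hk2 : 2 ≤ k)
    (hkmin : ∀ j : ℕ, 1 ≤ j → j < k → iteratedDeriv j (fun α : ℝ => (z (α : ℂ)).re) α₀ = 0)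
    (hkne : iteratedDeriv k (fun α : ℝ => (z (α : ℂ)).re) α₀ ≠ 0)
    (hkeven : Even k) :
    ∃ ε > (0 : ℝ), ∃ h : ℝ → ℝ,
      ContDiffOn ℝ 1 h (Set.Ioo (α₀ - ε) (α₀ + ε)) ∧
      h α₀ = 0 ∧
      (∀ α β : ℝ, |α - α₀| < ε → |β| < ε →
        ((α : ℂ) + (β : ℂ) * Complex.I ∈ U ∧
          (FnumC z ψ ((α : ℂ) + (β : ℂ) * Complex.I) = 0 ↔ β = h α))) ∧
      ∃ ε' : ℝ, 0 < ε' ∧ ε' ≤ ε ∧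
        (∀ α : ℝ, α ≠ α₀ → |α - α₀| < ε' → h α ≠ 0) ∧
        (∀ α α' : ℝ, α₀ < α → α < α₀ + ε' → α₀ - ε' < α' → α' < α₀ → h α * h α' < 0) := by
  have hU' : U ∈ 𝓝 (α₀ : ℂ) := hU.mem_nhds hα₀
  have hz' : AnalyticAt ℂ z (α₀ : ℂ) := hz.analyticAt hU'
  have hψ' : ContDiffAt ℝ 2 ψ (α₀ : ℂ) := (hψ.contDiffAt hU').of_le (WithTop.coe_le_coe.2 le_top)
  have hreal : ∀ᶠ α : ℝ in 𝓝 α₀, (α : ℂ) ∈ U := Complex.continuous_ofReal.continuousAt hU'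
  rw [fderiv_re_one hz'.differentiableAt] at hc
  rw [fderiv_im_one hz'.differentiableAt] at hd
  exact stmt_13_general hU' hz' hψ' hG (hreal.mono ha) (.of_eq_sqrt hz' he (hreal.mono hb))
    hc hd.ne' (by omega) hkmin hkne hkeven
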